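/- arXiv:1210.0802 — 2 statements merged into one kernel-verified Lean document; each statement's English description precedes it below -/
import Mathlib

section
/- Let A, B : ℝ × ℝ × ℝ → ℝ, (t,q,v) ↦ A(t,q,v), B(t,q,v), be smooth. Then there exists a smooth Lagrangian L : ℝ × ℝ × ℝ → ℝ such that for every twice continuously differentiable curve q : ℝ → ℝ and every t, EL(L)[q](t) = A(t, q(t), q'(t))·q''(t) + B(t, q(t), q'(t)), if and only if the Helmholtz condition ∂B/∂v(t,q,v) = ∂A/∂t(t,q,v) + v·∂A/∂q(t,q,v) holds for all (t,q,v) ∈ ℝ³. -/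
/-- Partial derivative of `L (t,q,v)` with respect to `t`. -/
noncomputable def pt (L : ℝ → ℝ → ℝ → ℝ) : ℝ → ℝ → ℝ → ℝ :=
  fun t q v => deriv (fun s => L s q v) t

/-- Partial derivative of `L (t,q,v)` with respect to `q`. -/
noncomputable def pq (L : ℝ → ℝ → ℝ → ℝ) : ℝ → ℝ → ℝ → ℝ :=
  fun t q v => deriv (fun s => L t s v) q

/-- Partial derivative of `L (t,q,v)` with respect to `v`. -/
noncomputable def pv (L : ℝ → ℝ → ℝ → ℝ) : ℝ → ℝ → ℝ → ℝ :=
  fun t q v => deriv (fun s => L t q s) v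

/-- The Euler–Lagrange expression of the Lagrangian `L` along a curve `q`:
`EL(L)[q](t) = d/dt[∂L/∂v(t, q(t), q'(t))] − ∂L/∂q(t, q(t), q'(t))`. -/
noncomputable def EL (L : ℝ → ℝ → ℝ → ℝ) (q : ℝ → ℝ) (t : ℝ) : ℝ :=
  deriv (fun s => pv L s (q s) (deriv q s)) t - pq L t (q t) (deriv q t)

/-!
By the chain rule, the Euler–Lagrange expression of `L` is affine in the acceleration: it is
`A·q'' + B` with `A = ∂ᵥ∂ᵥL` and `B = ∂ₜ∂ᵥL + v ∂_q∂ᵥL - ∂_qL`. Since a curve can have any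
prescribed 2-jet, these are the only possible coefficients, and for every `L` they satisfy
`∂ᵥB = ∂ₜA + v ∂_qA` by symmetry of second derivatives.

Conversely, let `K` be a second primitive of `A` in `v`. Its lower-order coefficient has the same
`v`-derivative as `B`, so the two differ by a function of `(t, q)` alone, which is absorbed by
adding to `K` a potential `W(t, q)`: this changes `B` by `-∂_qW` and leaves `A` alone.
-/

open Set Function
open scoped Topology ContDiff

section ParametricIntegral

universe u

theorem exists_eventually_forall_norm_le_of_continuous {X Y F : Type*} [TopologicalSpace X]
    [TopologicalSpace Y] [SeminormedAddCommGroup F] {f : X → Y → F} (hf : Continuous ↿f)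
    {K : Set Y} (hK : IsCompact K) (x₀ : X) :
    ∃ C, ∀ᶠ x in 𝓝 x₀, ∀ y ∈ K, ‖f x y‖ ≤ C := by
  have hf_slice : Continuous (f x₀) := hf.comp (Continuous.prodMk_right x₀)
  obtain ⟨C, hC⟩ := hK.exists_bound_of_continuousOn hf_slice.continuousOn
  refine ⟨C + 1, hK.eventually_forall_of_forall_eventually fun y hy => ?_⟩
  have hlt : ‖f x₀ y‖ < C + 1 := (hC y hy).trans_lt (lt_add_one C)
  exact ((hf.norm.tendsto (x₀, y)).eventually_lt_const hlt).mono fun _ h => h.le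

theorem contDiff_uncurry_fderiv_left {E F G : Type*} [NormedAddCommGroup E] [NormedSpace ℝ E]
    [NormedAddCommGroup F] [NormedSpace ℝ F] [NormedAddCommGroup G] [NormedSpace ℝ G]
    {f : E → G → F} {m n : WithTop ℕ∞} (hf : ContDiff ℝ n ↿f) (hmn : m + 1 ≤ n) :
    ContDiff ℝ m ↿(fun x y => fderiv ℝ (f · y) x) := by
  have hf_swap : ContDiff ℝ n (uncurry fun (p : E × G) (x : E) => f x p.2) :=
    hf.comp (contDiff_snd.prodMk (contDiff_snd.comp contDiff_fst))
  exact hf_swap.fderiv contDiff_fst hmn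

theorem hasFDerivAt_intervalIntegral_of_contDiff {E F : Type*} [NormedAddCommGroup E]
    [NormedSpace ℝ E] [NormedAddCommGroup F] [NormedSpace ℝ F] {f : E → ℝ → F}
    (hf : ContDiff ℝ 1 ↿f) (a b : ℝ) (x₀ : E) :
    HasFDerivAt (fun x => ∫ s in a..b, f x s) (∫ s in a..b, fderiv ℝ (f · s) x₀) x₀ := by
  have hf'_cont : Continuous ↿(fun x s => fderiv ℝ (f · s) x) :=
    (contDiff_uncurry_fderiv_left hf (m := 0) (by simp)).continuous
  have hf_slice (x : E) : Continuous (f x) := hf.continuous.comp (Continuous.prodMk_right x)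
  obtain ⟨C, hC⟩ := exists_eventually_forall_norm_le_of_continuous hf'_cont
    (isCompact_uIcc (a := a) (b := b)) x₀
  refine intervalIntegral.hasFDerivAt_integral_of_dominated_of_fderiv_le
    (F' := fun x s => fderiv ℝ (f · s) x) (bound := fun _ => C) hC
    (.of_forall fun x => (hf_slice x).aestronglyMeasurable) ((hf_slice x₀).intervalIntegrable a b)
    (hf'_cont.comp (Continuous.prodMk_right x₀)).aestronglyMeasurable
    (.of_forall fun s hs x hx => hx s (uIoc_subset_uIcc hs)) intervalIntegrable_const
    (.of_forall fun s _ x _ => ?_)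
  have hf_left : ContDiff ℝ 1 (f · s) := hf.comp (contDiff_prodMk_left s)
  exact (hf_left.differentiable one_ne_zero x).hasFDerivAt

variable {E F : Type u} [NormedAddCommGroup E] [NormedSpace ℝ E]
  [NormedAddCommGroup F] [NormedSpace ℝ F] {n : ℕ∞}

theorem contDiff_parametric_intervalIntegral_nat (n : ℕ) (a b : ℝ) :
    ∀ {F : Type u} [NormedAddCommGroup F] [NormedSpace ℝ F] {f : E → ℝ → F},
      ContDiff ℝ n ↿f → ContDiff ℝ n fun x => ∫ s in a..b, f x s := by
  induction n with
  | zero =>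
    intro F _ _ f hf
    exact contDiff_zero.2
      (intervalIntegral.continuous_parametric_intervalIntegral_of_continuous' hf.continuous a b)
  | succ n ih =>
    intro F _ _ f hf
    push_cast at hf ⊢
    exact contDiff_succ_iff_hasFDerivAt.2
      ⟨fun x => ∫ s in a..b, fderiv ℝ (f · s) x, ih (contDiff_uncurry_fderiv_left hf le_rfl),
        hasFDerivAt_intervalIntegral_of_contDiff (hf.of_le le_add_self) a b⟩

theorem contDiff_parametric_intervalIntegral {f : E → ℝ → F} (hf : ContDiff ℝ n ↿f) (a b : ℝ) :
    ContDiff ℝ n fun x => ∫ s in a..b, f x s :=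
  contDiff_iff_forall_nat_le.2 fun m hm =>
    contDiff_parametric_intervalIntegral_nat m a b (hf.of_le (mod_cast hm))

theorem contDiff_parametric_primitive {f : E → ℝ → F} (hf : ContDiff ℝ n ↿f) (a : ℝ) :
    ContDiff ℝ n fun p : E × ℝ => ∫ s in a..p.2, f p.1 s := by
  -- Rescaling to a fixed interval moves the variable endpoint into the integrand.
  have h_rescale : (fun p : E × ℝ => ∫ s in a..p.2, f p.1 s) =
      fun p => (p.2 - a) • ∫ s in (0 : ℝ)..1, f p.1 (a + (p.2 - a) * s) := by
    funext p
    simp [intervalIntegral.smul_integral_comp_add_mul]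
  have h_integrand : ContDiff ℝ n ↿(fun (p : E × ℝ) (s : ℝ) => f p.1 (a + (p.2 - a) * s)) :=
    hf.comp (f := fun r : (E × ℝ) × ℝ => (r.1.1, a + (r.1.2 - a) * r.2)) (by fun_prop)
  rw [h_rescale]
  exact (contDiff_snd.sub contDiff_const).smul
    (contDiff_parametric_intervalIntegral h_integrand 0 1)

theorem exists_contDiff_hasDerivAt [CompleteSpace F] {f : E → ℝ → F} (hf : ContDiff ℝ n ↿f) :
    ∃ P : E → ℝ → F, ContDiff ℝ n ↿P ∧ ∀ x s, HasDerivAt (P x) (f x s) s := by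
  refine ⟨fun x s => ∫ r in (0 : ℝ)..s, f x r, contDiff_parametric_primitive hf 0, fun x s => ?_⟩
  have hf_slice : Continuous (f x) := hf.continuous.comp (Continuous.prodMk_right x)
  exact (hf_slice.integral_hasStrictDerivAt 0 s).hasDerivAt

end ParametricIntegral

theorem differentiable_of_contDiff_of_add_one_le {E F : Type*} [NormedAddCommGroup E]
    [NormedSpace ℝ E] [NormedAddCommGroup F] [NormedSpace ℝ F] {m n : WithTop ℕ∞} {f : E → F}
    (hf : ContDiff ℝ n f) (hmn : m + 1 ≤ n) : Differentiable ℝ f :=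
  (hf.of_le (le_add_self.trans hmn)).differentiable one_ne_zero

theorem fderiv_fderiv_apply_comm {E F : Type*} [NormedAddCommGroup E] [NormedSpace ℝ E]
    [NormedAddCommGroup F] [NormedSpace ℝ F] {f : E → F} {x : E} (hf : ContDiffAt ℝ 2 f x)
    (v w : E) :
    fderiv ℝ (fun y => fderiv ℝ f y v) x w = fderiv ℝ (fun y => fderiv ℝ f y w) x v := by
  have hf' : DifferentiableAt ℝ (fderiv ℝ f) x :=
    (hf.fderiv_right (m := 1) (by norm_num)).differentiableAt one_ne_zero
  have h_apply (u : E) :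
      fderiv ℝ (fun y => fderiv ℝ f y u) x = (fderiv ℝ (fderiv ℝ f) x).flip u := by
    simp [fderiv_clm_apply hf' (differentiableAt_const u)]
  have h_symm : IsSymmSndFDerivAt ℝ f x := hf.isSymmSndFDerivAt (by simp)
  simpa only [h_apply, ContinuousLinearMap.flip_apply] using h_symm w v

section PartialDerivatives

variable {L : ℝ → ℝ → ℝ → ℝ} {m n : WithTop ℕ∞}

theorem hasDerivAt_along_curve_fderiv (hL : Differentiable ℝ ↿L) {a b c : ℝ → ℝ} {a' b' c' s : ℝ}
    (ha : HasDerivAt a a' s) (hb : HasDerivAt b b' s) (hc : HasDerivAt c c' s) :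
    HasDerivAt (fun r => L (a r) (b r) (c r)) (fderiv ℝ ↿L (a s, b s, c s) (a', b', c')) s :=
  HasFDerivAt.comp_hasDerivAt (l := ↿L) s (hL (a s, b s, c s)).hasFDerivAt
    (ha.prodMk (hb.prodMk hc))

theorem uncurry_pt_eq_fderiv (hL : Differentiable ℝ ↿L) :
    ↿(pt L) = fun p => fderiv ℝ ↿L p (1, 0, 0) :=
  funext fun (t, q, v) => (hasDerivAt_along_curve_fderiv hL (hasDerivAt_id t)
    (hasDerivAt_const t q) (hasDerivAt_const t v)).deriv

theorem uncurry_pq_eq_fderiv (hL : Differentiable ℝ ↿L) :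
    ↿(pq L) = fun p => fderiv ℝ ↿L p (0, 1, 0) :=
  funext fun (t, q, v) => (hasDerivAt_along_curve_fderiv hL (hasDerivAt_const q t)
    (hasDerivAt_id q) (hasDerivAt_const q v)).deriv

theorem uncurry_pv_eq_fderiv (hL : Differentiable ℝ ↿L) :
    ↿(pv L) = fun p => fderiv ℝ ↿L p (0, 0, 1) :=
  funext fun (t, q, v) => (hasDerivAt_along_curve_fderiv hL (hasDerivAt_const v t)
    (hasDerivAt_const v q) (hasDerivAt_id v)).deriv

theorem hasDerivAt_along_curve (hL : Differentiable ℝ ↿L) {a b c : ℝ → ℝ} {a' b' c' s : ℝ}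
    (ha : HasDerivAt a a' s) (hb : HasDerivAt b b' s) (hc : HasDerivAt c c' s) :
    HasDerivAt (fun r => L (a r) (b r) (c r))
      (a' * pt L (a s) (b s) (c s) + b' * pq L (a s) (b s) (c s) + c' * pv L (a s) (b s) (c s))
      s := by
  have h_basis : (a', b', c') =
      a' • ((1, 0, 0) : ℝ × ℝ × ℝ) + b' • (0, 1, 0) + c' • (0, 0, 1) := by simp
  have hpt := congrFun (uncurry_pt_eq_fderiv hL) (a s, b s, c s)
  have hpq := congrFun (uncurry_pq_eq_fderiv hL) (a s, b s, c s)
  have hpv := congrFun (uncurry_pv_eq_fderiv hL) (a s, b s, c s)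
  have h_chain := hasDerivAt_along_curve_fderiv hL ha hb hc
  rwa [h_basis, map_add, map_add, map_smul, map_smul, map_smul, ← hpt, ← hpq, ← hpv] at h_chain

theorem hasDerivAt_pq (hL : Differentiable ℝ ↿L) (t q v : ℝ) :
    HasDerivAt (fun s => L t s v) (pq L t q v) q := by
  simpa using hasDerivAt_along_curve hL (hasDerivAt_const q t) (hasDerivAt_id q)
    (hasDerivAt_const q v)

theorem hasDerivAt_pv (hL : Differentiable ℝ ↿L) (t q v : ℝ) :
    HasDerivAt (L t q) (pv L t q v) v := by
  simpa using hasDerivAt_along_curve hL (hasDerivAt_const v t) (hasDerivAt_const v q)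
    (hasDerivAt_id v)

theorem contDiff_pt (hL : ContDiff ℝ n ↿L) (hmn : m + 1 ≤ n) : ContDiff ℝ m ↿(pt L) := by
  rw [uncurry_pt_eq_fderiv (differentiable_of_contDiff_of_add_one_le hL hmn)]
  exact (hL.fderiv_right hmn).clm_apply contDiff_const

theorem contDiff_pq (hL : ContDiff ℝ n ↿L) (hmn : m + 1 ≤ n) : ContDiff ℝ m ↿(pq L) := by
  rw [uncurry_pq_eq_fderiv (differentiable_of_contDiff_of_add_one_le hL hmn)]
  exact (hL.fderiv_right hmn).clm_apply contDiff_const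

theorem contDiff_pv (hL : ContDiff ℝ n ↿L) (hmn : m + 1 ≤ n) : ContDiff ℝ m ↿(pv L) := by
  rw [uncurry_pv_eq_fderiv (differentiable_of_contDiff_of_add_one_le hL hmn)]
  exact (hL.fderiv_right hmn).clm_apply contDiff_const

theorem pv_pt_comm (hL : ContDiff ℝ 2 ↿L) : pv (pt L) = pt (pv L) := by
  have hL_diff : Differentiable ℝ ↿L := hL.differentiable two_ne_zero
  have hpt : Differentiable ℝ ↿(pt L) :=
    (contDiff_pt hL one_add_one_eq_two.le).differentiable one_ne_zero
  have hpv : Differentiable ℝ ↿(pv L) :=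
    (contDiff_pv hL one_add_one_eq_two.le).differentiable one_ne_zero
  have h_comm : ↿(pv (pt L)) = ↿(pt (pv L)) := by
    rw [uncurry_pv_eq_fderiv hpt, uncurry_pt_eq_fderiv hpv, uncurry_pt_eq_fderiv hL_diff,
      uncurry_pv_eq_fderiv hL_diff]
    exact funext fun p => fderiv_fderiv_apply_comm hL.contDiffAt _ _
  funext t q v
  exact congrFun h_comm (t, q, v)

theorem pv_pq_comm (hL : ContDiff ℝ 2 ↿L) : pv (pq L) = pq (pv L) := by
  have hL_diff : Differentiable ℝ ↿L := hL.differentiable two_ne_zero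
  have hpq : Differentiable ℝ ↿(pq L) :=
    (contDiff_pq hL one_add_one_eq_two.le).differentiable one_ne_zero
  have hpv : Differentiable ℝ ↿(pv L) :=
    (contDiff_pv hL one_add_one_eq_two.le).differentiable one_ne_zero
  have h_comm : ↿(pv (pq L)) = ↿(pq (pv L)) := by
    rw [uncurry_pv_eq_fderiv hpq, uncurry_pq_eq_fderiv hpv, uncurry_pq_eq_fderiv hL_diff,
      uncurry_pv_eq_fderiv hL_diff]
    exact funext fun p => fderiv_fderiv_apply_comm hL.contDiffAt _ _
  funext t q v
  exact congrFun h_comm (t, q, v)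

theorem exists_contDiff_pv_eq {A : ℝ → ℝ → ℝ → ℝ} {n : ℕ∞} (hA : ContDiff ℝ n ↿A) :
    ∃ P : ℝ → ℝ → ℝ → ℝ, ContDiff ℝ n ↿P ∧ pv P = A := by
  have hA_assoc : ContDiff ℝ n ↿(fun (x : ℝ × ℝ) (v : ℝ) => A x.1 x.2 v) :=
    hA.comp (f := fun y : (ℝ × ℝ) × ℝ => (y.1.1, y.1.2, y.2)) (by fun_prop)
  obtain ⟨P, hP, hP_deriv⟩ := exists_contDiff_hasDerivAt hA_assoc
  refine ⟨fun t q v => P (t, q) v, ?_, ?_⟩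
  · exact hP.comp (f := fun p : ℝ × ℝ × ℝ => ((p.1, p.2.1), p.2.2)) (by fun_prop)
  · funext t q v
    exact (hP_deriv (t, q) v).deriv

end PartialDerivatives

section EulerLagrange

variable {L : ℝ → ℝ → ℝ → ℝ}

/-- The acceleration-free coefficient `∂ₜ∂ᵥL + v ∂_q∂ᵥL - ∂_qL` of the Euler–Lagrange expression
of `L`; the coefficient of the acceleration is `∂ᵥ∂ᵥL`. -/
noncomputable def lowerOrderEL (L : ℝ → ℝ → ℝ → ℝ) (t q v : ℝ) : ℝ :=
  pt (pv L) t q v + v * pq (pv L) t q v - pq L t q v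

theorem EL_eq_pv_pv_mul_add_lowerOrderEL (hL : ContDiff ℝ 2 ↿L) {q : ℝ → ℝ}
    (hq : ContDiff ℝ 2 q) (t : ℝ) :
    EL L q t =
      pv (pv L) t (q t) (deriv q t) * deriv (deriv q) t + lowerOrderEL L t (q t) (deriv q t) := by
  have hpv : Differentiable ℝ ↿(pv L) :=
    (contDiff_pv hL one_add_one_eq_two.le).differentiable one_ne_zero
  have hq_deriv : HasDerivAt q (deriv q t) t := (hq.differentiable two_ne_zero t).hasDerivAt
  have hq_deriv_deriv : HasDerivAt (deriv q) (deriv (deriv q) t) t :=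
    (hq.differentiable_deriv_two t).hasDerivAt
  have h_chain := (hasDerivAt_along_curve hpv (hasDerivAt_id' t) hq_deriv hq_deriv_deriv).deriv
  rw [EL, h_chain, lowerOrderEL]
  ring

theorem exists_contDiff_with_two_jet (n : WithTop ℕ∞) (t x v a : ℝ) :
    ∃ q : ℝ → ℝ, ContDiff ℝ n q ∧ q t = x ∧ deriv q t = v ∧ deriv (deriv q) t = a := by
  have h_shift (s : ℝ) : HasDerivAt (fun r => r - t) 1 s := (hasDerivAt_id s).sub_const t
  have h_deriv : deriv (fun s => x + v * (s - t) + a / 2 * (s - t) ^ 2) =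
      fun s => v + a * (s - t) := by
    funext s
    refine ((((h_shift s).const_mul v).const_add x).add
      (((h_shift s).pow 2).const_mul (a / 2))).deriv.trans ?_
    ring
  refine ⟨fun s => x + v * (s - t) + a / 2 * (s - t) ^ 2, by fun_prop, by simp, by simp [h_deriv],
    ?_⟩
  rw [h_deriv, (((h_shift t).const_mul a).const_add v).deriv, mul_one]

theorem EL_eq_mul_add_iff (hL : ContDiff ℝ 2 ↿L) {A B : ℝ → ℝ → ℝ → ℝ} :
    (∀ q : ℝ → ℝ, ContDiff ℝ 2 q → ∀ t,
      EL L q t = A t (q t) (deriv q t) * deriv (deriv q) t + B t (q t) (deriv q t)) ↔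
      pv (pv L) = A ∧ lowerOrderEL L = B := by
  constructor
  · intro hEL
    have h_affine (t x v a : ℝ) :
        pv (pv L) t x v * a + lowerOrderEL L t x v = A t x v * a + B t x v := by
      obtain ⟨q, hq, rfl, rfl, rfl⟩ := exists_contDiff_with_two_jet 2 t x v a
      rw [← EL_eq_pv_pv_mul_add_lowerOrderEL hL hq, hEL q hq]
    constructor <;> funext t x v <;> linarith [h_affine t x v 0, h_affine t x v 1]
  · rintro ⟨rfl, rfl⟩ q hq t
    exact EL_eq_pv_pv_mul_add_lowerOrderEL hL hq t

theorem hasDerivAt_lowerOrderEL (hL : ContDiff ℝ 3 ↿L) (t q v : ℝ) :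
    HasDerivAt (lowerOrderEL L t q) (pt (pv (pv L)) t q v + v * pq (pv (pv L)) t q v) v := by
  have hpv : ContDiff ℝ 2 ↿(pv L) := contDiff_pv hL two_add_one_eq_three.le
  have hpt_pv : Differentiable ℝ ↿(pt (pv L)) :=
    (contDiff_pt hpv one_add_one_eq_two.le).differentiable one_ne_zero
  have hpq_pv : Differentiable ℝ ↿(pq (pv L)) :=
    (contDiff_pq hpv one_add_one_eq_two.le).differentiable one_ne_zero
  have hpq : Differentiable ℝ ↿(pq L) :=
    (contDiff_pq hL two_add_one_eq_three.le).differentiable two_ne_zero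
  have h_deriv := ((hasDerivAt_pv hpt_pv t q v).add
    ((hasDerivAt_id' v).mul (hasDerivAt_pv hpq_pv t q v))).sub (hasDerivAt_pv hpq t q v)
  rw [pv_pt_comm hpv, pv_pq_comm hpv, pv_pq_comm (hL.of_le (by norm_num))] at h_deriv
  exact h_deriv.congr_deriv (by ring)

theorem contDiff_lowerOrderEL {m n : WithTop ℕ∞} (hL : ContDiff ℝ n ↿L) (hmn : m + 1 + 1 ≤ n) :
    ContDiff ℝ m ↿(lowerOrderEL L) := by
  have hpv : ContDiff ℝ (m + 1) ↿(pv L) := contDiff_pv hL hmn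
  have hpq : ContDiff ℝ m ↿(pq L) := (contDiff_pq hL hmn).of_le le_self_add
  exact ((contDiff_pt hpv le_rfl).add ((contDiff_snd.comp contDiff_snd).mul
    (contDiff_pq hpv le_rfl))).sub hpq

theorem pv_add_potential (L : ℝ → ℝ → ℝ → ℝ) (W : ℝ → ℝ → ℝ) :
    pv (fun t q v => L t q v + W t q) = pv L := by
  funext t q v
  exact deriv_add_const (W t q)

theorem lowerOrderEL_add_potential (hL : Differentiable ℝ ↿L) {W : ℝ → ℝ → ℝ} {t q W' : ℝ}
    (hW : HasDerivAt (W t) W' q) (v : ℝ) :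
    lowerOrderEL (fun t q v => L t q v + W t q) t q v = lowerOrderEL L t q v - W' := by
  have hpq : pq (fun t q v => L t q v + W t q) t q v = pq L t q v + W' :=
    ((hasDerivAt_pq hL t q v).add hW).deriv
  rw [lowerOrderEL, pv_add_potential, hpq, lowerOrderEL]
  ring

end EulerLagrange

theorem exists_lagrangian_of_helmholtz {A B : ℝ → ℝ → ℝ → ℝ} (hA : ContDiff ℝ ∞ ↿A)
    (hB : ContDiff ℝ ∞ ↿B) (h_helmholtz : ∀ t q v, pv B t q v = pt A t q v + v * pq A t q v) :
    ∃ L : ℝ → ℝ → ℝ → ℝ, ContDiff ℝ ∞ ↿L ∧ pv (pv L) = A ∧ lowerOrderEL L = B := by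
  obtain ⟨P, hP, rfl⟩ := exists_contDiff_pv_eq hA
  obtain ⟨K, hK, rfl⟩ := exists_contDiff_pv_eq hP
  have hB_diff : Differentiable ℝ ↿B := hB.differentiable (by simp)
  have hK_diff : Differentiable ℝ ↿K := hK.differentiable (by simp)
  have h_defect_deriv (t q v : ℝ) : HasDerivAt (fun v => lowerOrderEL K t q v - B t q v) 0 v := by
    have h_deriv := (hasDerivAt_lowerOrderEL (mod_cast contDiff_infty.1 hK 3) t q v).sub
      (hasDerivAt_pv hB_diff t q v)
    rwa [h_helmholtz, sub_self] at h_deriv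
  have h_defect_const (t q v : ℝ) :
      lowerOrderEL K t q v - B t q v = lowerOrderEL K t q 0 - B t q 0 :=
    is_const_of_deriv_eq_zero (fun s => (h_defect_deriv t q s).differentiableAt)
      (fun s => (h_defect_deriv t q s).deriv) v 0
  have h_defect_smooth : ContDiff ℝ ∞ ↿(fun t q => lowerOrderEL K t q 0 - B t q 0) :=
    ((contDiff_lowerOrderEL hK le_rfl).sub hB).comp
      (f := fun p : ℝ × ℝ => (p.1, p.2, 0)) (by fun_prop)
  obtain ⟨W, hW, hW_deriv⟩ := exists_contDiff_hasDerivAt h_defect_smooth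
  refine ⟨fun t q v => K t q v + W t q, ?_, ?_, ?_⟩
  · exact hK.add (hW.comp (f := fun p : ℝ × ℝ × ℝ => (p.1, p.2.1)) (by fun_prop))
  · rw [pv_add_potential]
  · funext t q v
    rw [lowerOrderEL_add_potential hK_diff (hW_deriv t q)]
    linarith [h_defect_const t q v]

/-- Helmholtz conditions for a single second-order ODE `A·q'' + B = 0`:
there is a Lagrangian `L` with `EL(L)[q] = A·q'' + B` along every `C²` curve
iff `∂B/∂v = ∂A/∂t + v·∂A/∂q` everywhere. -/
theorem helmholtz_scalar_second_order_ode
    (A B : ℝ → ℝ → ℝ → ℝ)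
    (hA : ContDiff ℝ (⊤ : ℕ∞) (fun p : ℝ × ℝ × ℝ => A p.1 p.2.1 p.2.2))
    (hB : ContDiff ℝ (⊤ : ℕ∞) (fun p : ℝ × ℝ × ℝ => B p.1 p.2.1 p.2.2)) :
    (∃ L : ℝ → ℝ → ℝ → ℝ,
      ContDiff ℝ (⊤ : ℕ∞) (fun p : ℝ × ℝ × ℝ => L p.1 p.2.1 p.2.2) ∧
      ∀ q : ℝ → ℝ, ContDiff ℝ 2 q → ∀ t : ℝ,
        EL L q t = A t (q t) (deriv q t) * deriv (deriv q) t + B t (q t) (deriv q t))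
    ↔ (∀ t q v : ℝ, pv B t q v = pt A t q v + v * pq A t q v) := by
  constructor
  · rintro ⟨L, hL, hEL⟩ t q v
    obtain ⟨rfl, rfl⟩ := (EL_eq_mul_add_iff (mod_cast contDiff_infty.1 hL 2)).1 hEL
    exact (hasDerivAt_lowerOrderEL (mod_cast contDiff_infty.1 hL 3) t q v).deriv
  · intro h_helmholtz
    obtain ⟨L, hL, hL_coeff⟩ := exists_lagrangian_of_helmholtz hA hB h_helmholtz
    exact ⟨L, hL, (EL_eq_mul_add_iff (mod_cast contDiff_infty.1 hL 2)).2 hL_coeff⟩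
end

section
/- Let q1, q2, λ : ℝ → ℝ be smooth functions. Then the following are equivalent: (a) for all compactly supported smooth functions h1, h2, h3 : ℝ → ℝ, the first variation of the action of the Lagrangian L = ½q̇1² + ½q̇2² + λ(q1 − q2) vanishes, i.e. ∫_ℝ [q1'(t)·h1'(t) + q2'(t)·h2'(t) + h3(t)·(q1(t) − q2(t)) + λ(t)·(h1(t) − h2(t))] dt = 0; (b) for all t ∈ ℝ, q1''(t) = 0, q2(t) = q1(t), and λ(t) = 0. -/
open MeasureTheory

open scoped ContDiff

/-!
Testing the first variation one coordinate at a time and integrating by parts, the fundamental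
lemma of the calculus of variations gives the Euler–Lagrange equations `(∂L/∂q̇ᵢ)' = ∂L/∂qᵢ`. The
multiplier `λ` is treated as a third coordinate whose velocity does not occur in `L`, so the
equations read `q1'' = λ`, `q2'' = -λ` and `0 = q1 - q2`. The constraint forces `q1'' = q2''`, that
is `λ = -λ`.
-/

section FundamentalLemma

variable {E : Type*} [NormedAddCommGroup E] [NormedSpace ℝ E] [FiniteDimensional ℝ E]
  [MeasurableSpace E] [BorelSpace E] {F : Type*} [NormedAddCommGroup F] [NormedSpace ℝ F]
  [CompleteSpace F]

theorem eq_zero_of_integral_contDiff_smul_eq_zero {μ : Measure E} [IsLocallyFiniteMeasure μ]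
    [μ.IsOpenPosMeasure] {f : E → F} (hf : Continuous f)
    (h : ∀ g : E → ℝ, ContDiff ℝ ∞ g → HasCompactSupport g → ∫ x, g x • f x ∂μ = 0) :
    f = 0 :=
  (hf.ae_eq_iff_eq μ continuous_zero).1 <|
    ae_eq_zero_of_integral_contDiff_smul_eq_zero hf.locallyIntegrable h

end FundamentalLemma

section IntegrationByParts

variable {F : Type*} [NormedAddCommGroup F] [NormedSpace ℝ F] {g : ℝ → ℝ} {p f : ℝ → F}

theorem integrable_smul_of_hasCompactSupport_left (hg : Continuous g)
    (hgc : HasCompactSupport g) (hf : Continuous f) : Integrable fun t ↦ g t • f t :=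
  (hg.smul hf).integrable_of_hasCompactSupport hgc.smul_right

theorem integrable_deriv_smul_add_smul (hg : ContDiff ℝ 1 g) (hgc : HasCompactSupport g)
    (hp : Continuous p) (hf : Continuous f) :
    Integrable fun t ↦ deriv g t • p t + g t • f t :=
  (integrable_smul_of_hasCompactSupport_left hg.continuous_deriv_one hgc.deriv hp).add
    (integrable_smul_of_hasCompactSupport_left hg.continuous hgc hf)

theorem integral_smul_deriv_eq_neg_deriv_smul (hg : ContDiff ℝ 1 g) (hgc : HasCompactSupport g)
    (hp : ContDiff ℝ 1 p) :
    ∫ t, g t • deriv p t = -∫ t, deriv g t • p t :=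
  integral_bilinear_hasDerivAt_right_eq_neg_left_of_integrable
    (L := ContinuousLinearMap.lsmul ℝ ℝ)
    (fun t _ ↦ (hg.differentiable_one t).hasDerivAt)
    (fun t _ ↦ (hp.differentiable_one t).hasDerivAt)
    (integrable_smul_of_hasCompactSupport_left hg.continuous hgc hp.continuous_deriv_one)
    (integrable_smul_of_hasCompactSupport_left hg.continuous_deriv_one hgc.deriv hp.continuous)
    (integrable_smul_of_hasCompactSupport_left hg.continuous hgc hp.continuous)

theorem integral_deriv_smul_add_smul (hg : ContDiff ℝ 1 g) (hgc : HasCompactSupport g)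
    (hp : ContDiff ℝ 1 p) (hf : Continuous f) :
    ∫ t, (deriv g t • p t + g t • f t) = ∫ t, g t • (f t - deriv p t) := by
  have hgp := integrable_smul_of_hasCompactSupport_left hg.continuous_deriv_one hgc.deriv
    hp.continuous
  have hgf := integrable_smul_of_hasCompactSupport_left hg.continuous hgc hf
  have hgp' := integrable_smul_of_hasCompactSupport_left hg.continuous hgc hp.continuous_deriv_one
  simp_rw [smul_sub]
  rw [integral_add hgp hgf, integral_sub hgf hgp', integral_smul_deriv_eq_neg_deriv_smul hg hgc hp,
    sub_neg_eq_add, add_comm]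

end IntegrationByParts

section EulerLagrange

variable {F : Type*} [NormedAddCommGroup F] [NormedSpace ℝ F]

theorem forall_integral_deriv_smul_add_smul_eq_zero_iff [CompleteSpace F] {p f : ℝ → F}
    (hp : ContDiff ℝ 1 p) (hf : Continuous f) :
    (∀ g : ℝ → ℝ, ContDiff ℝ ∞ g → HasCompactSupport g →
      ∫ t, (deriv g t • p t + g t • f t) = 0) ↔ deriv p = f := by
  constructor
  · intro h
    have hfp : f - deriv p = 0 := by
      refine eq_zero_of_integral_contDiff_smul_eq_zero (μ := volume)
        (hf.sub hp.continuous_deriv_one) fun g hg hgc ↦ ?_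
      exact (integral_deriv_smul_add_smul (hg.of_le (by simp)) hgc hp hf).symm.trans (h g hg hgc)
    exact (sub_eq_zero.1 hfp).symm
  · rintro rfl g hg hgc
    simp [integral_deriv_smul_add_smul (hg.of_le (by simp)) hgc hp hf]

variable {ι : Type*} [Fintype ι] {p f : ι → ℝ → F}

theorem forall_integral_sum_eq_zero_iff_forall_integral_eq_zero
    (hp : ∀ i, Continuous (p i)) (hf : ∀ i, Continuous (f i)) :
    (∀ h : ι → ℝ → ℝ, (∀ i, ContDiff ℝ ∞ (h i)) → (∀ i, HasCompactSupport (h i)) →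
      ∫ t, ∑ i, (deriv (h i) t • p i t + h i t • f i t) = 0) ↔
    ∀ i, ∀ g : ℝ → ℝ, ContDiff ℝ ∞ g → HasCompactSupport g →
      ∫ t, (deriv g t • p i t + g t • f i t) = 0 := by
  classical
  constructor
  · intro H i g hg hgc
    let h : ι → ℝ → ℝ := Pi.single i g
    have h_self : h i = g := by simp [h]
    have h_other {j : ι} (hji : j ≠ i) : h j = 0 := by simp [h, hji]
    have h_smooth (j : ι) : ContDiff ℝ ∞ (h j) := by
      obtain rfl | hji := eq_or_ne j i
      · exact h_self ▸ hg
      · exact h_other hji ▸ contDiff_zero_fun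
    have h_supp (j : ι) : HasCompactSupport (h j) := by
      obtain rfl | hji := eq_or_ne j i
      · exact h_self ▸ hgc
      · exact h_other hji ▸ HasCompactSupport.zero
    have sum_eq (t : ℝ) : ∑ j, (deriv (h j) t • p j t + h j t • f j t) =
        deriv g t • p i t + g t • f i t := by
      rw [Fintype.sum_eq_single i fun j hji ↦ by simp [h_other hji], h_self]
    simpa only [sum_eq] using H h h_smooth h_supp
  · intro H h hh hhc
    rw [integral_finsetSum _ fun i _ ↦
      integrable_deriv_smul_add_smul ((hh i).of_le (by simp)) (hhc i) (hp i) (hf i)]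
    exact Finset.sum_eq_zero fun i _ ↦ H i (h i) (hh i) (hhc i)

-- `p i` and `f i` stand for `∂L/∂q̇ᵢ` and `∂L/∂qᵢ` along the curve.
theorem forall_integral_sum_deriv_smul_add_smul_eq_zero_iff [CompleteSpace F]
    (hp : ∀ i, ContDiff ℝ 1 (p i)) (hf : ∀ i, Continuous (f i)) :
    (∀ h : ι → ℝ → ℝ, (∀ i, ContDiff ℝ ∞ (h i)) → (∀ i, HasCompactSupport (h i)) →
      ∫ t, ∑ i, (deriv (h i) t • p i t + h i t • f i t) = 0) ↔ ∀ i, deriv (p i) = f i :=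
  (forall_integral_sum_eq_zero_iff_forall_integral_eq_zero
    (fun i ↦ (hp i).continuous) hf).trans <|
    forall_congr' fun i ↦ forall_integral_deriv_smul_add_smul_eq_zero_iff (hp i) (hf i)

end EulerLagrange

section ConstrainedExample

variable {q1 q2 lam : ℝ → ℝ}

theorem constrained_first_variation_eq_zero_iff_euler_lagrange
    (hq1 : ContDiff ℝ 2 q1) (hq2 : ContDiff ℝ 2 q2) (hlam : Continuous lam) :
    (∀ h1 h2 h3 : ℝ → ℝ,
      ContDiff ℝ ∞ h1 → HasCompactSupport h1 →
      ContDiff ℝ ∞ h2 → HasCompactSupport h2 →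
      ContDiff ℝ ∞ h3 → HasCompactSupport h3 →
      (∫ t : ℝ, (deriv q1 t * deriv h1 t + deriv q2 t * deriv h2 t +
        h3 t * (q1 t - q2 t) + lam t * (h1 t - h2 t))) = 0)
    ↔ deriv (deriv q1) = lam ∧ deriv (deriv q2) = -lam ∧ 0 = q1 - q2 := by
  have hp : ∀ i, ContDiff ℝ 1 (![deriv q1, deriv q2, 0] i) :=
    Fin.forall_fin_succ.2 ⟨hq1.deriv', Fin.forall_fin_two.2 ⟨hq2.deriv', contDiff_zero_fun⟩⟩
  have hf : ∀ i, Continuous (![lam, -lam, q1 - q2] i) :=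
    Fin.forall_fin_succ.2
      ⟨hlam, Fin.forall_fin_two.2 ⟨hlam.neg, hq1.continuous.sub hq2.continuous⟩⟩
  have integrand_eq (h : Fin 3 → ℝ → ℝ) (t : ℝ) :
      ∑ i, (deriv (h i) t • ![deriv q1, deriv q2, 0] i t + h i t • ![lam, -lam, q1 - q2] i t) =
      deriv q1 t * deriv (h 0) t + deriv q2 t * deriv (h 1) t + h 2 t * (q1 t - q2 t) +
        lam t * (h 0 t - h 1 t) := by
    simp only [Fin.sum_univ_three, Matrix.cons_val, Pi.zero_apply, Pi.neg_apply, Pi.sub_apply,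
      smul_eq_mul]
    ring
  have euler_lagrange := forall_integral_sum_deriv_smul_add_smul_eq_zero_iff hp hf
  simp only [integrand_eq] at euler_lagrange
  refine Iff.trans ⟨fun H h hh hhc ↦ ?_, fun H h1 h2 h3 hh1 hc1 hh2 hc2 hh3 hc3 ↦ ?_⟩
    (euler_lagrange.trans ?_)
  · exact H (h 0) (h 1) (h 2) (hh 0) (hhc 0) (hh 1) (hhc 1) (hh 2) (hhc 2)
  · exact H ![h1, h2, h3] (Fin.forall_fin_succ.2 ⟨hh1, Fin.forall_fin_two.2 ⟨hh2, hh3⟩⟩)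
      (Fin.forall_fin_succ.2 ⟨hc1, Fin.forall_fin_two.2 ⟨hc2, hc3⟩⟩)
  · simp [Fin.forall_fin_succ]

theorem constrained_example_first_variation_general
    (hq1 : ContDiff ℝ 2 q1) (hq2 : ContDiff ℝ 2 q2) (hlam : Continuous lam) :
    (∀ h1 h2 h3 : ℝ → ℝ,
      ContDiff ℝ ∞ h1 → HasCompactSupport h1 →
      ContDiff ℝ ∞ h2 → HasCompactSupport h2 →
      ContDiff ℝ ∞ h3 → HasCompactSupport h3 →
      (∫ t : ℝ, (deriv q1 t * deriv h1 t + deriv q2 t * deriv h2 t +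
        h3 t * (q1 t - q2 t) + lam t * (h1 t - h2 t))) = 0)
    ↔ (∀ t : ℝ, deriv (deriv q1) t = 0 ∧ q2 t = q1 t ∧ lam t = 0) := by
  rw [constrained_first_variation_eq_zero_iff_euler_lagrange hq1 hq2 hlam]
  constructor
  · rintro ⟨hlam_eq, hlam_neg, hconstraint⟩ t
    obtain rfl : q1 = q2 := sub_eq_zero.1 hconstraint.symm
    have hlam_zero : lam = 0 := self_eq_neg.1 (hlam_eq.symm.trans hlam_neg)
    exact ⟨congrFun (hlam_eq.trans hlam_zero) t, rfl, congrFun hlam_zero t⟩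
  · intro h
    obtain rfl : q2 = q1 := funext fun t ↦ (h t).2.1
    obtain rfl : lam = 0 := funext fun t ↦ (h t).2.2
    have hderiv : deriv (deriv q2) = 0 := funext fun t ↦ (h t).1
    exact ⟨hderiv, hderiv.trans neg_zero.symm, (sub_self q2).symm⟩

end ConstrainedExample

/-- For smooth `q1, q2, λ : ℝ → ℝ`, the first variation of the action of the
Lagrangian `L = ½q̇1² + ½q̇2² + λ(q1 − q2)` vanishes for all compactly supported
smooth variations `h1, h2, h3` iff `q1'' = 0`, `q2 = q1` and `λ = 0` everywhere. -/
theorem constrained_example_first_variation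
    (q1 q2 lam : ℝ → ℝ)
    (hq1 : ContDiff ℝ (⊤ : ℕ∞) q1) (hq2 : ContDiff ℝ (⊤ : ℕ∞) q2) (hlam : ContDiff ℝ (⊤ : ℕ∞) lam) :
    (∀ h1 h2 h3 : ℝ → ℝ,
      ContDiff ℝ (⊤ : ℕ∞) h1 → HasCompactSupport h1 →
      ContDiff ℝ (⊤ : ℕ∞) h2 → HasCompactSupport h2 →
      ContDiff ℝ (⊤ : ℕ∞) h3 → HasCompactSupport h3 →
      (∫ t : ℝ, (deriv q1 t * deriv h1 t + deriv q2 t * deriv h2 t +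
        h3 t * (q1 t - q2 t) + lam t * (h1 t - h2 t))) = 0)
    ↔ (∀ t : ℝ, deriv (deriv q1) t = 0 ∧ q2 t = q1 t ∧ lam t = 0) := by
  exact constrained_example_first_variation_general (contDiff_infty.1 hq1 2)
    (contDiff_infty.1 hq2 2) hlam.continuous
end
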